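/- arXiv:math/0407244 — 5 statements merged into one kernel-verified Lean document; each statement's English description precedes it below -/
import Mathlib

section
/- Let B be the standard bilinear form of signature (3,2) on ℝ⁵. Let f and f̂₂ be 2-dimensional totally isotropic subspaces such that s₂ := f ∩ f̂₂ is 1-dimensional. Let V⁰ ≠ V¹ be 4-dimensional subspaces with f + f̂₂ ⊆ V⁰ ∩ V¹, and let ν₀, ν₁ be vectors with B(ν_i, ν_i) = 1 and ν_i ∈ (V^i)^⊥ for i = 0, 1, where B restricted to each V^i is nondegenerate. Then ε := B(ν₀, ν₁) satisfies ε² = 1, and σ₂ := ν₁ − ε ν₀ is a nonzero element of s₂. -/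
/-!
Let `W = f + f̂₂`, of dimension `2 + 2 - 1 = 3`. Since `B` is nondegenerate, `W^⊥` has dimension `2`.
It contains the line `s₂ = f ∩ f̂₂` (because `f` and `f̂₂` are totally isotropic) and the vector `ν₀`,
which is not isotropic and hence not in `s₂`; so `W^⊥ = s₂ ⊕ ℝ ν₀`. Now `ν₁ ∈ W^⊥` gives
`ν₁ = σ + c ν₀` with `σ ∈ s₂` orthogonal to `ν₀` and `ν₁`, whence `B(ν₀, ν₁) = c` and
`1 = B(ν₁, ν₁) = c²`. If `σ = 0`, then `V⁰` and `V¹` both equal the hyperplane `ν₀^⊥`, a contradiction.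
-/

/-- The standard symmetric bilinear form of signature `(p, n - p)` on `ℝⁿ`;
here we use `n = 5`, `p = 3`, i.e. signature `(3,2)`. -/
noncomputable def bform (n p : ℕ) (x y : Fin n → ℝ) : ℝ :=
  ∑ i : Fin n, (if (i : ℕ) < p then x i * y i else -(x i * y i))

/-- `bform n p` bundled as a Mathlib bilinear form. -/
noncomputable def bformBilin (n p : ℕ) : LinearMap.BilinForm ℝ (Fin n → ℝ) :=
  LinearMap.mk₂ ℝ (bform n p)
    (fun x y z => by
      simp only [bform, ← Finset.sum_add_distrib]
      refine Finset.sum_congr rfl fun i _ => ?_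
      split_ifs <;> simp only [Pi.add_apply] <;> ring)
    (fun c x y => by
      simp only [bform, smul_eq_mul, Finset.mul_sum]
      refine Finset.sum_congr rfl fun i _ => ?_
      split_ifs <;> simp only [Pi.smul_apply, smul_eq_mul] <;> ring)
    (fun x y z => by
      simp only [bform, ← Finset.sum_add_distrib]
      refine Finset.sum_congr rfl fun i _ => ?_
      split_ifs <;> simp only [Pi.add_apply] <;> ring)
    (fun c x y => by
      simp only [bform, smul_eq_mul, Finset.mul_sum]
      refine Finset.sum_congr rfl fun i _ => ?_
      split_ifs <;> simp only [Pi.smul_apply, smul_eq_mul] <;> ring)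

theorem bformBilin_apply (n p : ℕ) (x y : Fin n → ℝ) : bformBilin n p x y = bform n p x y := rfl

theorem bform_comm (n p : ℕ) (x y : Fin n → ℝ) : bform n p x y = bform n p y x := by
  simp only [bform, mul_comm]

theorem bformBilin_isRefl (n p : ℕ) : (bformBilin n p).IsRefl := fun x y h => by
  rw [bformBilin_apply] at h ⊢
  rwa [bform_comm]

theorem bformBilin_nondegenerate (n p : ℕ) : (bformBilin n p).Nondegenerate := by
  refine (LinearMap.IsRefl.nondegenerate_iff_separatingLeft (bformBilin_isRefl n p)).2 ?_
  intro x hx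
  funext i
  -- pairing with the `i`-th basis vector gives `± x i`
  have h := hx (Pi.single i 1)
  rw [bformBilin_apply, bform, Finset.sum_eq_single i] at h
  · split_ifs at h <;> simpa using h
  · intro j _ hj
    simp [Pi.single_eq_of_ne hj]
  · simp

/-- A subspace of codimension one orthogonal to `v ≠ 0` is the whole hyperplane `v^⊥`. -/
theorem eq_orthogonal_span_singleton (V : Submodule ℝ (Fin 5 → ℝ)) (hV : Module.finrank ℝ V = 4)
    (v : Fin 5 → ℝ) (hv : v ≠ 0) (hperp : ∀ w ∈ V, bform 5 3 v w = 0) :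
    V = (bformBilin 5 3).orthogonal (ℝ ∙ v) := by
  apply Submodule.eq_of_le_of_finrank_eq
  · intro w hw u hu
    obtain ⟨c, rfl⟩ := Submodule.mem_span_singleton.1 hu
    have h := hperp w hw
    rw [← bformBilin_apply] at h
    simp [h]
  · rw [LinearMap.BilinForm.finrank_orthogonal (bformBilin_nondegenerate 5 3),
      finrank_span_singleton hv, hV]
    simp

/-- Lemma 10 of the paper: for unit normals `ν₀, ν₁` of two distinct nondegenerate
4-dimensional subspaces `V⁰ ≠ V¹` of `ℝ^{3,2}` both containing `f + f̂₂`, where `f, f̂₂`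
are totally isotropic 2-planes with `s₂ = f ∩ f̂₂` a line, one has
`ε := B(ν₀,ν₁) = ±1` and `σ₂ := ν₁ - ε ν₀` is a nonzero element of `s₂`. -/
theorem stmt_5 (f fh₂ V0 V1 : Submodule ℝ (Fin 5 → ℝ))
    (hfdim : Module.finrank ℝ f = 2)
    (hfh₂dim : Module.finrank ℝ fh₂ = 2)
    (hfiso : ∀ w ∈ f, ∀ w' ∈ f, bform 5 3 w w' = 0)
    (hfh₂iso : ∀ w ∈ fh₂, ∀ w' ∈ fh₂, bform 5 3 w w' = 0)
    (hs₂ : Module.finrank ℝ (f ⊓ fh₂ : Submodule ℝ (Fin 5 → ℝ)) = 1)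
    (hV0dim : Module.finrank ℝ V0 = 4)
    (hV1dim : Module.finrank ℝ V1 = 4)
    (hVne : V0 ≠ V1)
    (hsub : f ⊔ fh₂ ≤ V0 ⊓ V1)
    (hV0nd : ∀ v ∈ V0, (∀ w ∈ V0, bform 5 3 v w = 0) → v = 0)
    (hV1nd : ∀ v ∈ V1, (∀ w ∈ V1, bform 5 3 v w = 0) → v = 0)
    (ν₀ ν₁ : Fin 5 → ℝ)
    (hν₀unit : bform 5 3 ν₀ ν₀ = 1)
    (hν₁unit : bform 5 3 ν₁ ν₁ = 1)
    (hν₀perp : ∀ w ∈ V0, bform 5 3 ν₀ w = 0)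
    (hν₁perp : ∀ w ∈ V1, bform 5 3 ν₁ w = 0) :
    (bform 5 3 ν₀ ν₁) ^ 2 = 1 ∧
    ν₁ - bform 5 3 ν₀ ν₁ • ν₀ ≠ 0 ∧
    ν₁ - bform 5 3 ν₀ ν₁ • ν₀ ∈ f ⊓ fh₂ := by
  have hf : f ≤ V0 ⊓ V1 := le_sup_left.trans hsub
  have hfh : fh₂ ≤ V0 ⊓ V1 := le_sup_right.trans hsub
  have hν₀ne : ν₀ ≠ 0 := by
    rintro rfl
    simp [bform] at hν₀unit
  have hWdim : Module.finrank ℝ (f ⊔ fh₂ : Submodule ℝ (Fin 5 → ℝ)) = 3 := by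
    have := Submodule.finrank_sup_add_finrank_inf_eq f fh₂
    omega
  have hperpdim :
      Module.finrank ℝ ((bformBilin 5 3).orthogonal (f ⊔ fh₂)) = 2 := by
    rw [LinearMap.BilinForm.finrank_orthogonal (bformBilin_nondegenerate 5 3), hWdim]
    simp
  have hmem : ∀ x, (∀ w ∈ f, bform 5 3 x w = 0) → (∀ w ∈ fh₂, bform 5 3 x w = 0) →
      x ∈ (bformBilin 5 3).orthogonal (f ⊔ fh₂) := by
    intro x h1 h2 w hw
    obtain ⟨a, ha, b, hb, rfl⟩ := Submodule.mem_sup.1 hw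
    change bformBilin 5 3 (a + b) x = 0
    rw [map_add, LinearMap.add_apply, bformBilin_apply, bformBilin_apply,
      bform_comm _ _ a, bform_comm _ _ b, h1 a ha, h2 b hb, add_zero]
  have hle : (f ⊓ fh₂) ⊔ (ℝ ∙ ν₀) ≤ (bformBilin 5 3).orthogonal (f ⊔ fh₂) := by
    refine sup_le (fun x hx => hmem x (hfiso x hx.1) (hfh₂iso x hx.2)) ?_
    rw [Submodule.span_singleton_le_iff_mem]
    exact hmem _ (fun w hw => hν₀perp w (hf hw).1) (fun w hw => hν₀perp w (hfh hw).1)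
  -- `ν₀` is orthogonal to `s₂ ⊆ V⁰` but not to itself, so the sum `s₂ + ℝ ν₀` is direct
  have hinf : (f ⊓ fh₂) ⊓ (ℝ ∙ ν₀) = ⊥ := by
    rw [eq_bot_iff]
    rintro x ⟨hx, hx'⟩
    obtain ⟨c, rfl⟩ := Submodule.mem_span_singleton.1 hx'
    have h := hν₀perp _ (hf hx.1).1
    rw [← bformBilin_apply, map_smul, bformBilin_apply, hν₀unit, smul_eq_mul, mul_one] at h
    simp [h]
  have hEq : (f ⊓ fh₂) ⊔ (ℝ ∙ ν₀) = (bformBilin 5 3).orthogonal (f ⊔ fh₂) := by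
    refine Submodule.eq_of_le_of_finrank_eq hle ?_
    have := Submodule.finrank_sup_add_finrank_inf_eq (f ⊓ fh₂) (ℝ ∙ ν₀)
    rw [hinf, finrank_bot, finrank_span_singleton hν₀ne, hs₂] at this
    omega
  have hν₁mem : ν₁ ∈ (f ⊓ fh₂) ⊔ (ℝ ∙ ν₀) := by
    rw [hEq]
    exact hmem _ (fun w hw => hν₁perp w (hf hw).2) (fun w hw => hν₁perp w (hfh hw).2)
  obtain ⟨σ, hσ, y, hy, hsum⟩ := Submodule.mem_sup.1 hν₁mem
  obtain ⟨c, rfl⟩ := Submodule.mem_span_singleton.1 hy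
  have h0σ : bform 5 3 ν₀ σ = 0 := hν₀perp σ (hf hσ.1).1
  have h1σ : bform 5 3 ν₁ σ = 0 := hν₁perp σ (hf hσ.1).2
  have hε : bform 5 3 ν₀ ν₁ = c := by
    rw [← hsum, ← bformBilin_apply, map_add, map_smul, bformBilin_apply, bformBilin_apply,
      h0σ, hν₀unit]
    simp
  have hc : c ^ 2 = 1 := by
    have h : bform 5 3 ν₁ (σ + c • ν₀) = 1 := by rw [hsum, hν₁unit]
    rw [← bformBilin_apply, map_add, map_smul, bformBilin_apply, bformBilin_apply,
      h1σ, bform_comm _ _ ν₁, hε, smul_eq_mul, zero_add] at h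
    rw [sq, h]
  have hσeq : ν₁ - c • ν₀ = σ := by rw [← hsum, add_sub_cancel_right]
  rw [hε, hσeq]
  refine ⟨hc, ?_, hσ⟩
  rintro rfl
  rw [zero_add] at hsum
  have hc0 : c ≠ 0 := by
    rintro rfl
    norm_num at hc
  apply hVne
  rw [eq_orthogonal_span_singleton V0 hV0dim ν₀ hν₀ne hν₀perp]
  refine (eq_orthogonal_span_singleton V1 hV1dim ν₀ hν₀ne fun w hw => ?_).symm
  have h := hν₁perp w hw
  rw [← hsum, ← bformBilin_apply, map_smul, LinearMap.smul_apply, smul_eq_mul] at h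
  exact (mul_eq_zero.1 h).resolve_left hc0
end

section
/- Let V be a real vector space with a symmetric bilinear form B and let f ⊆ V be a totally isotropic subspace. Let ν₀, ν₁, ν₂ ∈ V satisfy B(ν_i, ν_i) = 1 for i = 0, 1, 2, and suppose there are real numbers ε₀, ε₁, ε₂ and vectors σ₀, σ₁, σ₂ ∈ f with ν₁ = ε₂ ν₀ + σ₂, ν₂ = ε₀ ν₁ + σ₀, and ν₀ = ε₁ ν₂ + σ₁. Then ε₀ ε₁ ε₂ = 1. -/
/-- Lemma 11 of the paper: if three "unit normals" `ν₀, ν₁, ν₂` (with `B(νᵢ,νᵢ) = 1`)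
are cyclically related by `ν₁ = ε₂ν₀ + σ₂`, `ν₂ = ε₀ν₁ + σ₀`, `ν₀ = ε₁ν₂ + σ₁` with the
`σᵢ` lying in a totally isotropic subspace `f`, then `ε₀ε₁ε₂ = 1`. -/
theorem stmt_6 (V : Type*) [AddCommGroup V] [Module ℝ V]
    (B : LinearMap.BilinForm ℝ V)
    (hsymm : ∀ x y : V, B x y = B y x)
    (f : Submodule ℝ V)
    (hf : ∀ w ∈ f, ∀ w' ∈ f, B w w' = 0)
    (ν₀ ν₁ ν₂ : V)
    (h₀ : B ν₀ ν₀ = 1) (h₁ : B ν₁ ν₁ = 1) (h₂ : B ν₂ ν₂ = 1)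
    (ε₀ ε₁ ε₂ : ℝ) (σ₀ σ₁ σ₂ : V)
    (hσ₀ : σ₀ ∈ f) (hσ₁ : σ₁ ∈ f) (hσ₂ : σ₂ ∈ f)
    (e₂ : ν₁ = ε₂ • ν₀ + σ₂)
    (e₀ : ν₂ = ε₀ • ν₁ + σ₀)
    (e₁ : ν₀ = ε₁ • ν₂ + σ₁) :
    ε₀ * ε₁ * ε₂ = 1 := by
  -- Going once around the cycle puts a multiple of `ν₁` into `f`, so that multiple is isotropic.
  have key : (1 - ε₀ * ε₁ * ε₂) • ν₁ = (ε₂ * ε₁) • σ₀ + ε₂ • σ₁ + σ₂ := by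
    linear_combination (norm := module) e₂ + ε₂ • e₁ + (ε₂ * ε₁) • e₀
  have hmem : (1 - ε₀ * ε₁ * ε₂) • ν₁ ∈ f := by
    rw [key]
    exact f.add_mem (f.add_mem (f.smul_mem _ hσ₀) (f.smul_mem _ hσ₁)) hσ₂
  have h := hf _ hmem _ hmem
  simp only [map_smul, LinearMap.smul_apply, smul_eq_mul, h₁, mul_one, mul_self_eq_zero] at h
  linarith
end

section
/- Label the six faces of a combinatorial cube by pairs (i, σ) with i ∈ {0,1,2} and σ ∈ {1, −1}, its vertices by triples v ∈ {1,−1}³ (the three faces incident to v being (0, v₀), (1, v₁), (2, v₂)), and its edges by unordered pairs of faces {(i,σ), (j,τ)} with i ≠ j. Let ε assign to each edge a value in {1, −1}, and suppose that for every vertex v ∈ {1,−1}³ one has ε({(0,v₀),(1,v₁)}) · ε({(1,v₁),(2,v₂)}) · ε({(2,v₂),(0,v₀)}) = 1. Then there exists δ : {0,1,2} × {1,−1} → {1,−1} such that for every edge, ε({(i,σ),(j,τ)}) = δ(i,σ) · δ(j,τ). -/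
/-!
The dual octahedron is simply connected, so the sign cocycle `ε` is determined by the signs
along paths from a base face. Take the base face to be `(0, true)`: the faces `(1, τ)` and
`(2, τ)` are adjacent to it and receive the sign of the shared edge, and `(0, σ)` receives the
sign of the path to it through `(1, true)`. Solving the vertex condition for the edge between
faces of axes `1` and `2` gives the coboundary identity there, and comparing two vertices
sharing that edge shows that the sign of the path from `(0, true)` to `(0, σ)` is the same
through every intermediate face.
-/

/-- Lemma 12 of the paper, combinatorial form.  Faces of the cube are pairs
`(i, σ) : Fin 3 × Bool`; vertices are `v : Fin 3 → Bool` (the three incident faces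
being `(0, v 0), (1, v 1), (2, v 2)`); and `ε` assigns to each unordered pair of faces
`{(i,σ), (j,τ)}` with `i ≠ j` (an edge) a sign `±1`.  If the product of `ε` over the
three edges at each vertex is `1`, then `ε` is a coboundary: `ε = δ(i,σ)·δ(j,τ)` for
some signs `δ` attached to the faces. -/
theorem stmt_7 (ε : (Fin 3 × Bool) → (Fin 3 × Bool) → ℤ)
    (hsymm : ∀ a b : Fin 3 × Bool, ε a b = ε b a)
    (hval : ∀ (i j : Fin 3) (σ τ : Bool), i ≠ j →
      ε (i, σ) (j, τ) = 1 ∨ ε (i, σ) (j, τ) = -1)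
    (hcocycle : ∀ v : Fin 3 → Bool,
      ε (0, v 0) (1, v 1) * ε (1, v 1) (2, v 2) * ε (2, v 2) (0, v 0) = 1) :
    ∃ δ : Fin 3 × Bool → ℤ, (∀ a, δ a = 1 ∨ δ a = -1) ∧
      ∀ (i j : Fin 3) (σ τ : Bool), i ≠ j →
        ε (i, σ) (j, τ) = δ (i, σ) * δ (j, τ) := by
  have hsq : ∀ (i j : Fin 3) (σ τ : Bool), i ≠ j → ε (i, σ) (j, τ) * ε (i, σ) (j, τ) = 1 := by
    intro i j σ τ h
    rcases hval i j σ τ h with h | h <;> simp [h]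
  have h01 := fun s t => hsq 0 1 s t (by decide)
  have h20 := fun u s => hsq 2 0 u s (by decide)
  have h12 : ∀ s t u, ε (1, t) (2, u) = ε (0, s) (1, t) * ε (2, u) (0, s) := by
    intro s t u
    have h : ε (0, s) (1, t) * ε (1, t) (2, u) * ε (2, u) (0, s) = 1 := hcocycle ![s, t, u]
    linear_combination ε (0, s) (1, t) * ε (2, u) (0, s) * h
      - ε (1, t) (2, u) * ε (2, u) (0, s) * ε (2, u) (0, s) * h01 s t
      - ε (1, t) (2, u) * h20 u s
  -- Paths between the two faces of axis `0` through `(1, t)` and through `(2, u)` agree.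
  have hpath : ∀ s t u, ε (0, s) (1, t) * ε (0, true) (1, t)
      = ε (2, u) (0, s) * ε (2, u) (0, true) := by
    intro s t u
    have h : ε (0, s) (1, t) * ε (2, u) (0, s) = ε (0, true) (1, t) * ε (2, u) (0, true) :=
      (h12 s t u).symm.trans (h12 true t u)
    linear_combination ε (2, u) (0, s) * ε (0, true) (1, t) * h
      - ε (0, s) (1, t) * ε (0, true) (1, t) * h20 u s
      + ε (2, u) (0, s) * ε (2, u) (0, true) * h01 true t
  let δ : Fin 3 × Bool → ℤ := fun a =>
    ![ε (0, a.2) (1, true) * ε (0, true) (1, true), ε (0, true) (1, a.2),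
      ε (2, a.2) (0, true)] a.1
  have e01 : ∀ s t, ε (0, s) (1, t) = δ (0, s) * δ (1, t) := by
    intro s t
    change _ = ε (0, s) (1, true) * ε (0, true) (1, true) * ε (0, true) (1, t)
    linear_combination ε (0, true) (1, t) * (hpath s t true - hpath s true true)
      - ε (0, s) (1, t) * h01 true t
  have e20 : ∀ u s, ε (2, u) (0, s) = δ (2, u) * δ (0, s) := by
    intro u s
    change _ = ε (2, u) (0, true) * (ε (0, s) (1, true) * ε (0, true) (1, true))
    linear_combination -ε (2, u) (0, true) * hpath s true u - ε (2, u) (0, s) * h20 u true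
  have e12 : ∀ t u, ε (1, t) (2, u) = δ (1, t) * δ (2, u) := fun t u => h12 true t u
  refine ⟨δ, ?_, ?_⟩
  · rintro ⟨i, s⟩
    fin_cases i
    · change ε (0, s) (1, true) * ε (0, true) (1, true) = 1 ∨
        ε (0, s) (1, true) * ε (0, true) (1, true) = -1
      rcases hval 0 1 s true (by decide) with h | h <;>
        rcases hval 0 1 true true (by decide) with h' | h' <;> simp [h, h']
    · exact hval 0 1 true s (by decide)
    · exact hval 2 0 s true (by decide)
  · intro i j s t hij
    fin_cases i <;> fin_cases j
    · exact absurd rfl hij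
    · exact e01 s t
    · exact (hsymm _ _).trans ((e20 t s).trans (mul_comm _ _))
    · exact (hsymm _ _).trans ((e01 t s).trans (mul_comm _ _))
    · exact absurd rfl hij
    · exact e12 s t
    · exact e20 s t
    · exact (hsymm _ _).trans ((e12 t s).trans (mul_comm _ _))
    · exact absurd rfl hij
end

section
/- Let E be a finite-dimensional real inner product space, λ ∈ ℝ, and let A, Â, r : E → E be linear maps with r bijective. Assume: (i) A is symmetric, ⟨Ax, y⟩ = ⟨x, Ay⟩ for all x, y; (ii) ⟨rÂx, ry⟩ = ⟨rx, rÂy⟩ for all x, y; (iii) r ∘ (Â + λ·id) = A + λ·id. If moreover r is symmetric, ⟨rx, y⟩ = ⟨x, ry⟩ for all x, y, then A and Â commute: A ∘ Â = Â ∘ A. -/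
/-! With `B = A + l` and `C = Ah + l`, the relation reads `r C = B`. Symmetry of `Ah` for
`⟨r ·, r ·⟩` gives `⟨B x, r y⟩ = ⟨r x, B y⟩`, which for symmetric `r` and `B` says `r B = B r`.
Hence `r (B C) = B r C = B B = r (C B)`, and injectivity of `r` yields `B C = C B`, which is
equivalent to `A Ah = Ah A`. -/

open RealInnerProductSpace

/-- Forward direction of Proposition 6 of the paper (pointwise form): with `A`
symmetric, `Â` symmetric for `⟨r·, r·⟩`, `r` invertible and `r ∘ (Â + λ) = A + λ`,
if `r` is symmetric then the shape operators commute: `A ∘ Â = Â ∘ A`. -/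
theorem stmt_9 {E : Type*} [NormedAddCommGroup E] [InnerProductSpace ℝ E]
    [FiniteDimensional ℝ E] (l : ℝ) (A Ah r : E →ₗ[ℝ] E)
    (hr : Function.Bijective r)
    (hA : ∀ x y : E, ⟪A x, y⟫ = ⟪x, A y⟫)
    (hAh : ∀ x y : E, ⟪r (Ah x), r y⟫ = ⟪r x, r (Ah y)⟫)
    (hrel : ∀ x : E, r (Ah x + l • x) = A x + l • x)
    (hrsymm : ∀ x y : E, ⟪r x, y⟫ = ⟪x, r y⟫) :
    A ∘ₗ Ah = Ah ∘ₗ A := by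
  have hrAh : ∀ x, r (Ah x) = A x + l • x - l • r x := fun x => by
    rw [← hrel x, map_add, map_smul, add_sub_cancel_right]
  -- Substituting `r ∘ Ah` into the symmetry of `Ah` turns it into `r ∘ A = A ∘ r`.
  have hcomm : ∀ x, r (A x) = A (r x) := fun x => by
    refine ext_inner_right ℝ fun y => ?_
    have h := hAh x y
    simp only [hrAh, inner_add_left, inner_sub_left, inner_add_right, inner_sub_right,
      real_inner_smul_left, real_inner_smul_right] at h
    rw [hrsymm, hA (r x)]
    linear_combination h + l * hrsymm x y
  ext x
  apply hr.1
  simp only [LinearMap.comp_apply]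
  rw [hcomm, hrAh, hrAh, hcomm, map_sub, map_add, map_smul, map_smul]
end

section
/- Let E be a finite-dimensional real inner product space, λ ∈ ℝ, and let A, Â, r : E → E be linear maps with r bijective. Assume: (i) A is symmetric, ⟨Ax, y⟩ = ⟨x, Ay⟩ for all x, y; (ii) ⟨rÂx, ry⟩ = ⟨rx, rÂy⟩ for all x, y; (iii) r ∘ (Â + λ·id) = A + λ·id. If A ∘ Â = Â ∘ A and A + λ·id is bijective, then r is symmetric: ⟨rx, y⟩ = ⟨x, ry⟩ for all x, y. -/
/-!
Write `B = A + l` and `C = Ah + l`, so that `r C = B`. Since `B` and `C` commute and `C` is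
surjective, `r` commutes with `B`. Symmetry of `Ah` for `⟪r ·, r ·⟫` says `⟪B x, r y⟫ = ⟪r x, B y⟫`,
and hence `⟪r x, B y⟫ = ⟪x, B r y⟫ = ⟪x, r (B y)⟫`; surjectivity of `B` gives the claim.
-/

open RealInnerProductSpace

/-- Converse direction of Proposition 6 of the paper (pointwise form): with `A`
symmetric, `Â` symmetric for `⟨r·, r·⟩`, `r` invertible, `r ∘ (Â + λ) = A + λ`,
if `A` and `Â` commute and `A + λ·id` is bijective, then `r` is symmetric. -/
theorem stmt_10 {E : Type*} [NormedAddCommGroup E] [InnerProductSpace ℝ E]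
    [FiniteDimensional ℝ E] (l : ℝ) (A Ah r : E →ₗ[ℝ] E)
    (hr : Function.Bijective r)
    (hA : ∀ x y : E, ⟪A x, y⟫ = ⟪x, A y⟫)
    (hAh : ∀ x y : E, ⟪r (Ah x), r y⟫ = ⟪r x, r (Ah y)⟫)
    (hrel : ∀ x : E, r (Ah x + l • x) = A x + l • x)
    (hcomm : A ∘ₗ Ah = Ah ∘ₗ A)
    (hinv : Function.Bijective (fun x : E => A x + l • x)) :
    ∀ x y : E, ⟪r x, y⟫ = ⟪x, r y⟫ := by
  -- With `B = A + l` and `C = Ah + l`: surjectivity of `C = r⁻¹ B`.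
  have hC : ∀ y, ∃ z, Ah z + l • z = y := fun y => by
    obtain ⟨z, hz⟩ := hinv.2 (r y)
    exact ⟨z, hr.1 ((hrel z).trans hz)⟩
  -- `r = B C⁻¹` commutes with `B`, since `r B C = r C B = B B = B r C`.
  have hrB : ∀ y, r (A y + l • y) = A (r y) + l • r y := fun y => by
    obtain ⟨z, rfl⟩ := hC y
    have hc : A (Ah z) = Ah (A z) := LinearMap.congr_fun hcomm z
    rw [hrel z, ← hrel (A z + l • z)]
    congr 1
    simp only [map_add, map_smul, hc, smul_add]
    abel
  have hBsymm : ∀ x y, ⟪A x + l • x, y⟫ = ⟪x, A y + l • y⟫ := fun x y => by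
    simp only [inner_add_left, inner_add_right, real_inner_smul_left,
      real_inner_smul_right, hA]
  -- Symmetry of `Ah` for `⟪r ·, r ·⟫`, shifted by `l` and rewritten through `r C = B`.
  have hBr : ∀ x y, ⟪A x + l • x, r y⟫ = ⟪r x, A y + l • y⟫ := fun x y => by
    rw [← hrel x, ← hrel y]
    simp only [map_add, map_smul, inner_add_left, inner_add_right, real_inner_smul_left,
      real_inner_smul_right, hAh]
  intro x y
  obtain ⟨w, rfl⟩ := hinv.2 y
  change ⟪r x, A w + l • w⟫ = ⟪x, r (A w + l • w)⟫
  rw [hrB, ← hBsymm x, hBr]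
end
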